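/- arXiv:2505.09520 — 2 statements merged into one kernel-verified Lean document; each statement's English description precedes it below -/
import Mathlib

section
/- Let (e_k^-)^κ denote the action of the antisymmetrizer e_k^- = (1/k!)∑_{σ∈S_k} sgn(σ)·σ on ℂ[Y_1,...,Y_k] via the Demazure-type action. Then for any polynomial f, ((e_k^-)^κ f)(Y_1,...,Y_k) = (1/k!) ∏_{i<j} ((Y_i − Y_j − κ)/(Y_i − Y_j)) · ∑_{σ∈S_k} sgn(σ) f(Y_{σ(1)},...,Y_{σ(k)}). -/
open MvPolynomial Finset

/-- The field of rational functions in the variables `Y 1, …, Y k` over `ℂ`. -/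
abbrev RatField (k : ℕ) : Type := FractionRing (MvPolynomial (Fin k) ℂ)

/-- The variable `Y i`, viewed in the field of rational functions. -/
noncomputable def Yv {k : ℕ} (i : Fin k) : RatField k :=
  algebraMap (MvPolynomial (Fin k) ℂ) (RatField k) (X i)

/-- The substitution `Y i ↦ Y (g i)` for a permutation `g`. -/
noncomputable def permMap {k : ℕ} (g : Equiv.Perm (Fin k)) :
    RatField k →+* RatField k :=
  IsFractionRing.lift
    (g := (algebraMap (MvPolynomial (Fin k) ℂ) (RatField k)).comp (rename g).toRingHom)
    (by
      exact (IsFractionRing.injective (MvPolynomial (Fin k) ℂ) (RatField k)).comp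
        (rename_injective _ g.injective))

/-- The Demazure-type operator `σ^κ_{ab} f = P_{ab} f + κ (f - P_{ab} f)/(Y a - Y b)`. -/
noncomputable def Dem {k : ℕ} (κ : ℂ) (a b : Fin k) (f : RatField k) : RatField k :=
  permMap (Equiv.swap a b) f +
    algebraMap (MvPolynomial (Fin k) ℂ) (RatField k) (C κ) *
      (f - permMap (Equiv.swap a b) f) / (Yv a - Yv b)

section Helpers

variable {k : ℕ}

/-- Constants in the field of rational functions. -/
noncomputable def cK (k : ℕ) (t : ℂ) : RatField k :=
  algebraMap (MvPolynomial (Fin k) ℂ) (RatField k) (C t)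

lemma permMap_alg (g : Equiv.Perm (Fin k)) (p : MvPolynomial (Fin k) ℂ) :
    permMap g (algebraMap _ (RatField k) p) = algebraMap _ (RatField k) (rename g p) := by
  unfold permMap
  rw [IsFractionRing.lift_algebraMap]
  rfl

lemma permMap_Yv (g : Equiv.Perm (Fin k)) (i : Fin k) : permMap g (Yv i) = Yv (g i) := by
  unfold Yv
  rw [permMap_alg, rename_X]

lemma permMap_cK (g : Equiv.Perm (Fin k)) (t : ℂ) : permMap g (cK k t) = cK k t := by
  unfold cK
  rw [permMap_alg, rename_C]

lemma permMap_mul (g h : Equiv.Perm (Fin k)) (x : RatField k) :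
    permMap (g * h) x = permMap g (permMap h x) := by
  have : permMap (g * h) = (permMap g).comp (permMap h) := by
    apply IsLocalization.ringHom_ext (nonZeroDivisors (MvPolynomial (Fin k) ℂ))
    ext p
    all_goals simp [permMap_alg]
  rw [this]; rfl

lemma permMap_one (x : RatField k) : permMap 1 x = x := by
  have : permMap (1 : Equiv.Perm (Fin k)) = RingHom.id _ := by
    apply IsLocalization.ringHom_ext (nonZeroDivisors (MvPolynomial (Fin k) ℂ))
    ext p
    all_goals simp [permMap_alg]
  rw [this]; rfl

lemma Yv_sub_ne (i j : Fin k) (hij : i ≠ j) (t : ℂ) : Yv i - Yv j - cK k t ≠ 0 := by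
  unfold Yv cK
  rw [← map_sub, ← map_sub]
  intro h
  rw [map_eq_zero_iff _ (IsFractionRing.injective (MvPolynomial (Fin k) ℂ) (RatField k))] at h
  have h1 := congrArg (MvPolynomial.eval (fun l => if l = i then t + 1 else 0)) h
  simp [Ne.symm hij] at h1

lemma perm_ind (P : Equiv.Perm (Fin k) → Prop) (h1 : P 1)
    (hm : ∀ g h, P g → P h → P (g * h))
    (hs : ∀ (i : ℕ) (h : i + 1 < k), P (Equiv.swap ⟨i, Nat.lt_of_succ_lt h⟩ ⟨i + 1, h⟩)) :
    ∀ g, P g := by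
  intro g
  cases k with
  | zero => rwa [Subsingleton.elim g 1]
  | succ n =>
    have hg : g ∈ Submonoid.closure
        (Set.range fun i : Fin n => Equiv.swap i.castSucc i.succ) := by
      rw [Equiv.Perm.mclosure_swap_castSucc_succ]; trivial
    induction hg using Submonoid.closure_induction with
    | mem x hx =>
      obtain ⟨i, rfl⟩ := hx
      exact hs i.1 (by omega)
    | one => exact h1
    | mul x y _ _ hx hy => exact hm x y hx hy

/-- The sign as an element of the field. -/
noncomputable def sg (σ : Equiv.Perm (Fin k)) : RatField k :=
  ((Equiv.Perm.sign σ : ℤ) : RatField k)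

lemma sg_mul (a b : Equiv.Perm (Fin k)) : sg (a * b) = sg a * sg b := by
  simp [sg]

lemma sg_one : sg (1 : Equiv.Perm (Fin k)) = 1 := by
  simp [sg]

lemma sg_sq (a : Equiv.Perm (Fin k)) : sg a * sg a = 1 := by
  rw [sg, ← Int.cast_mul, ← Units.val_mul, Int.units_mul_self]; simp

lemma sg_swap {i j : Fin k} (h : i ≠ j) : sg (Equiv.swap i j) = -1 := by
  simp [sg, Equiv.Perm.sign_swap h]

lemma permMap_sg (g a : Equiv.Perm (Fin k)) : permMap g (sg a) = sg a := by
  simp [sg]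

/-- The plain antisymmetrization. -/
noncomputable def Eop (x : RatField k) : RatField k :=
  ∑ σ : Equiv.Perm (Fin k), sg σ * permMap σ x

lemma Eop_perm (g : Equiv.Perm (Fin k)) (x : RatField k) :
    Eop (permMap g x) = sg g * Eop x := by
  unfold Eop
  rw [Finset.mul_sum]
  refine Fintype.sum_equiv (Equiv.mulRight g) _ _ fun σ => ?_
  simp only [Equiv.coe_mulRight, permMap_mul, sg_mul]
  linear_combination (-(sg σ * permMap σ (permMap g x))) * sg_sq g

lemma perm_Eop (g : Equiv.Perm (Fin k)) (x : RatField k) :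
    permMap g (Eop x) = sg g * Eop x := by
  unfold Eop
  rw [map_sum, Finset.mul_sum]
  refine Fintype.sum_equiv (Equiv.mulLeft g) _ _ fun σ => ?_
  simp only [Equiv.coe_mulLeft, permMap_mul, sg_mul, map_mul, permMap_sg]
  linear_combination (-(sg σ * permMap g (permMap σ x))) * sg_sq g

lemma Eop_add (x y : RatField k) : Eop (x + y) = Eop x + Eop y := by
  simp [Eop, mul_add, Finset.sum_add_distrib]

lemma Eop_sum {ι : Type*} (s : Finset ι) (f : ι → RatField k) :
    Eop (∑ i ∈ s, f i) = ∑ i ∈ s, Eop (f i) := by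
  unfold Eop
  simp_rw [map_sum, Finset.mul_sum]
  exact Finset.sum_comm

/-- The index set of pairs. -/
def prs (k : ℕ) : Finset (Fin k × Fin k) :=
  Finset.univ.filter fun q : Fin k × Fin k => q.1 < q.2

/-- The deformed Vandermonde. -/
noncomputable def vd (k : ℕ) (t : ℂ) : RatField k :=
  ∏ q ∈ prs k, (Yv q.1 - Yv q.2 - cK k t)

lemma vd_ne (t : ℂ) : vd k t ≠ 0 := by
  unfold vd
  rw [Finset.prod_ne_zero_iff]
  intro q hq
  simp only [prs, Finset.mem_filter] at hq
  exact Yv_sub_ne _ _ hq.2.ne t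

lemma swap_adj_lt (i : ℕ) (h : i + 1 < k) (a b : Fin k) (hab : a < b)
    (hne : (a, b) ≠ ((⟨i, Nat.lt_of_succ_lt h⟩ : Fin k), (⟨i + 1, h⟩ : Fin k))) :
    Equiv.swap (⟨i, Nat.lt_of_succ_lt h⟩ : Fin k) ⟨i + 1, h⟩ a <
      Equiv.swap (⟨i, Nat.lt_of_succ_lt h⟩ : Fin k) ⟨i + 1, h⟩ b := by
  simp only [ne_eq, Prod.mk.injEq, Fin.ext_iff] at hne
  rw [Fin.lt_def] at hab
  simp only [Equiv.swap_apply_def, Fin.ext_iff]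
  split_ifs <;> simp only [Fin.lt_def] <;> omega

lemma vd_swap (i : ℕ) (h : i + 1 < k) (t : ℂ) :
    permMap (Equiv.swap ⟨i, Nat.lt_of_succ_lt h⟩ ⟨i + 1, h⟩) (vd k t) *
      (Yv ⟨i, Nat.lt_of_succ_lt h⟩ - Yv ⟨i + 1, h⟩ - cK k t) =
    vd k t * (Yv ⟨i + 1, h⟩ - Yv ⟨i, Nat.lt_of_succ_lt h⟩ - cK k t) := by
  set a : Fin k := ⟨i, Nat.lt_of_succ_lt h⟩ with ha
  set b : Fin k := ⟨i + 1, h⟩ with hb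
  have hab : (a, b) ∈ prs k := by
    simp [prs, ha, hb]
  unfold vd
  rw [← Finset.mul_prod_erase _ _ hab, map_mul, map_prod]
  simp only [map_sub, permMap_Yv, permMap_cK, Equiv.swap_apply_left, Equiv.swap_apply_right]
  have key : ∏ q ∈ (prs k).erase (a, b),
      (Yv (Equiv.swap a b q.1) - Yv (Equiv.swap a b q.2) - cK k t) =
      ∏ q ∈ (prs k).erase (a, b), (Yv q.1 - Yv q.2 - cK k t) := by
    have hmaps : ∀ q ∈ (prs k).erase (a, b),
        (Equiv.swap a b q.1, Equiv.swap a b q.2) ∈ (prs k).erase (a, b) := by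
      rintro ⟨c, d⟩ hq
      simp only [Finset.mem_erase, prs, Finset.mem_filter, Finset.mem_univ, true_and] at hq ⊢
      refine ⟨?_, swap_adj_lt i h c d hq.2 hq.1⟩
      intro he
      simp only [Prod.mk.injEq] at he
      have h1 : c = b := by
        have := congrArg (Equiv.swap a b) he.1
        simpa using this
      have h2 : d = a := by
        have := congrArg (Equiv.swap a b) he.2
        simpa using this
      have h3 := hq.2
      rw [h1, h2, Fin.lt_def] at h3
      simp [ha, hb] at h3
    refine Finset.prod_nbij' (fun q => (Equiv.swap a b q.1, Equiv.swap a b q.2))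
      (fun q => (Equiv.swap a b q.1, Equiv.swap a b q.2)) hmaps hmaps ?_ ?_ ?_
    · intro q _; simp
    · intro q _; simp
    · intro q _; rfl
  rw [key]
  ring

lemma cK_zero : cK k 0 = 0 := by simp [cK]

lemma vd_zero_perm (g : Equiv.Perm (Fin k)) : permMap g (vd k 0) = sg g * vd k 0 := by
  induction g using perm_ind with
  | h1 => rw [permMap_one, sg_one, one_mul]
  | hm g h hg hh => rw [permMap_mul, hh, map_mul, permMap_sg, hg, sg_mul]; ring
  | hs i h =>
    have hne : (⟨i, Nat.lt_of_succ_lt h⟩ : Fin k) ≠ ⟨i + 1, h⟩ := by simp [Fin.ext_iff]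
    rw [sg_swap hne]
    have h1 := vd_swap i h (0 : ℂ)
    apply mul_right_cancel₀ (Yv_sub_ne _ _ hne 0)
    rw [h1, cK_zero]; ring

lemma prs_card : (prs k).card = ∑ i ∈ Finset.range k, i := by
  rw [Finset.sum_range, prs, Finset.card_filter, Fintype.sum_prod_type_right]
  refine Finset.sum_congr rfl fun j _ => ?_
  rw [← Finset.card_filter, Finset.filter_gt_eq_Iio, Fin.card_Iio]

lemma sum_inj_ge (n : ℕ) (s : Finset ℕ) (hs : s.card = n) :
    ∑ i ∈ Finset.range n, i ≤ ∑ i ∈ s, i := by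
  induction n generalizing s with
  | zero => simp
  | succ n ih =>
    have hne : s.Nonempty := by rw [← Finset.card_pos]; omega
    have hmem := s.max'_mem hne
    rw [Finset.sum_range_succ, ← Finset.sum_erase_add _ _ hmem]
    have h1 := ih (s.erase (s.max' hne)) (by rw [Finset.card_erase_of_mem hmem]; omega)
    have h2 : s ⊆ Finset.range (s.max' hne + 1) := by
      intro x hx
      have := s.le_max' x hx
      simp; omega
    have h3 := Finset.card_le_card h2
    rw [Finset.card_range] at h3
    omega

lemma Eop_monomial (d : Fin k →₀ ℕ) (c : ℂ) (hd : (∑ i, d i) < (prs k).card) :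
    Eop (algebraMap _ (RatField k) (monomial d c)) = 0 := by
  have hni : ¬ Function.Injective d := by
    intro hinj
    have h1 := sum_inj_ge k (Finset.univ.image d)
      (by rw [Finset.card_image_of_injective _ hinj]; simp)
    rw [Finset.sum_image (fun a _ b _ hab => hinj hab), ← prs_card] at h1
    omega
  simp only [Function.Injective, not_forall] at hni
  obtain ⟨i, j, hij, hne⟩ := hni
  have h1 := Eop_perm (Equiv.swap i j) (algebraMap _ (RatField k) (monomial d c))
  have h2 : Finsupp.mapDomain (Equiv.swap i j) d = d := by
    ext l
    rw [Finsupp.mapDomain_equiv_apply, Equiv.symm_swap, Equiv.swap_apply_def]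
    split_ifs with h h'
    · rw [h, hij]
    · rw [h', hij]
    · rfl
  rw [permMap_alg, rename_monomial, h2, sg_swap hne] at h1
  exact self_eq_neg.mp (by rw [← neg_one_mul]; exact h1)

lemma Eop_low (p : MvPolynomial (Fin k) ℂ) (hp : p.totalDegree < (prs k).card) :
    Eop (algebraMap _ (RatField k) p) = 0 := by
  rw [p.as_sum, map_sum, Eop_sum]
  refine Finset.sum_eq_zero fun d hd => Eop_monomial d _ ?_
  have := le_totalDegree hd
  rw [Finsupp.sum_fintype _ _ (fun _ => rfl)] at this
  omega

lemma Eop_vd (t : ℂ) : Eop (vd k t) = (k.factorial : RatField k) * vd k 0 := by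
  have h0 : Eop (vd k 0) = (k.factorial : RatField k) * vd k 0 := by
    unfold Eop
    simp_rw [vd_zero_perm, ← mul_assoc, sg_sq]
    simp [Fintype.card_perm]
  have h1 : vd k t = ∑ s ∈ (prs k).powerset, algebraMap _ (RatField k)
      ((∏ q ∈ s, (X q.1 - X q.2 : MvPolynomial (Fin k) ℂ)) * ∏ q ∈ prs k \ s, C (-t)) := by
    rw [← map_sum, ← Finset.prod_add, map_prod]
    unfold vd
    refine Finset.prod_congr rfl fun q _ => ?_
    simp [Yv, cK, sub_eq_add_neg]
  rw [h1, Eop_sum, Finset.sum_eq_single (prs k), ← h0]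
  · congr 1
    unfold vd
    simp [Yv, cK]
  · intro s hs hne
    apply Eop_low
    rw [Finset.mem_powerset] at hs
    have hlt := Finset.card_lt_card (Finset.ssubset_iff_subset_ne.mpr ⟨hs, hne⟩)
    refine lt_of_le_of_lt ?_ hlt
    refine (totalDegree_mul _ _).trans ?_
    rw [← map_prod, totalDegree_C, add_zero]
    refine (totalDegree_finsetProd _ _).trans ?_
    refine (Finset.sum_le_card_nsmul s _ 1 fun q _ => ?_).trans (by simp)
    refine (totalDegree_sub _ _).trans ?_
    simp [totalDegree_X]
  · intro h; simp at h

end Helpers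

/-- Let `ρ` be the action of `S_k` in which each simple transposition
acts by the Demazure-type operator `σ_i^κ`, and let `(e_k^-)^κ` be the induced action of
the antisymmetrizer `e_k^- = (1/k!) ∑_{σ ∈ S_k} sgn(σ) σ`.  Then for any polynomial `f`,
`(e_k^-)^κ f = (1/k!) ∏_{i<j} ((Y_i − Y_j − κ)/(Y_i − Y_j)) ·
∑_{σ ∈ S_k} sgn(σ) f(Y_{σ(1)},…,Y_{σ(k)})`. -/
theorem statement5 (k : ℕ) (κ : ℂ)
    (ρ : Equiv.Perm (Fin k) → RatField k → RatField k)
    (hone : ρ 1 = id)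
    (hmul : ∀ g h : Equiv.Perm (Fin k), ρ (g * h) = ρ g ∘ ρ h)
    (hgen : ∀ (i : ℕ) (h : i + 1 < k),
      ρ (Equiv.swap ⟨i, by omega⟩ ⟨i + 1, h⟩) = Dem κ ⟨i, by omega⟩ ⟨i + 1, h⟩)
    (p : MvPolynomial (Fin k) ℂ) :
    ((k.factorial : RatField k))⁻¹ *
        ∑ σ : Equiv.Perm (Fin k),
          ((Equiv.Perm.sign σ : ℤ) : RatField k) *
            ρ σ (algebraMap (MvPolynomial (Fin k) ℂ) (RatField k) p) =
      ((k.factorial : RatField k))⁻¹ *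
        (∏ q ∈ Finset.univ.filter fun q : Fin k × Fin k => q.1 < q.2,
          ((Yv q.1 - Yv q.2 -
              algebraMap (MvPolynomial (Fin k) ℂ) (RatField k) (C κ)) /
            (Yv q.1 - Yv q.2))) *
        ∑ σ : Equiv.Perm (Fin k),
          ((Equiv.Perm.sign σ : ℤ) : RatField k) *
            permMap σ (algebraMap (MvPolynomial (Fin k) ℂ) (RatField k) p) := by
  classical
  change (k.factorial : RatField k)⁻¹ * ∑ σ : Equiv.Perm (Fin k), sg σ * ρ σ _ =
    (k.factorial : RatField k)⁻¹ *
      (∏ q ∈ prs k, ((Yv q.1 - Yv q.2 - cK k κ) / (Yv q.1 - Yv q.2))) * Eop _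
  generalize algebraMap (MvPolynomial (Fin k) ℂ) (RatField k) p = f
  have hdem : ∀ (i : ℕ) (h : i + 1 < k) (x : RatField k),
      ρ (Equiv.swap ⟨i, by omega⟩ ⟨i + 1, h⟩) x =
        permMap (Equiv.swap ⟨i, by omega⟩ ⟨i + 1, h⟩) x +
        cK k κ * (x - permMap (Equiv.swap ⟨i, by omega⟩ ⟨i + 1, h⟩) x) /
          (Yv ⟨i, by omega⟩ - Yv ⟨i + 1, h⟩) := by
    intro i h x; rw [hgen i h]; rfl
  have hadd : ∀ g x y, ρ g (x + y) = ρ g x + ρ g y := by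
    intro g
    induction g using perm_ind with
    | h1 => simp [hone]
    | hm g h hg hh => intro x y; simp [hmul, hg, hh]
    | hs i h => intro x y; simp only [hdem, map_add]; ring
  have hsym : ∀ g x y, (∀ w, permMap w x = x) → ρ g (x * y) = x * ρ g y := by
    intro g
    induction g using perm_ind with
    | h1 => simp [hone]
    | hm g h hg hh => intro x y hx; simp [hmul, hg _ _ hx, hh _ _ hx]
    | hs i h => intro x y hx; simp only [hdem, map_mul, hx]; ring
  have hvd : ∀ g, ρ g (vd k κ) = sg g * vd k κ := by
    intro g
    induction g using perm_ind with
    | h1 => simp [hone, sg_one]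
    | hm g h hg hh =>
      simp only [hmul, Function.comp, hh]
      rw [hsym _ _ _ (fun w => permMap_sg w _), hg, sg_mul]; ring
    | hs i h =>
      have hne : (⟨i, by omega⟩ : Fin k) ≠ ⟨i + 1, h⟩ := by simp [Fin.ext_iff]
      rw [sg_swap hne, hdem]
      have h1 := vd_swap i h κ
      have h2 := Yv_sub_ne _ _ hne 0
      rw [cK_zero, sub_zero] at h2
      field_simp
      linear_combination h1
  obtain ⟨A, hA⟩ : ∃ A : RatField k → RatField k,
      ∀ x, A x = ∑ σ : Equiv.Perm (Fin k), sg σ * ρ σ x := ⟨_, fun _ => rfl⟩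
  have Aadd : ∀ x y, A (x + y) = A x + A y := by
    intro x y; simp [hA, hadd, mul_add, Finset.sum_add_distrib]
  have Asym : ∀ x y, (∀ w, permMap w x = x) → A (x * y) = x * A y := by
    intro x y hx
    simp only [hA, hsym _ _ _ hx, Finset.mul_sum]
    exact Finset.sum_congr rfl fun _ _ => by ring
  have Azero : A 0 = 0 := by simpa using Aadd 0 0
  have Asum : ∀ (s : Finset (Equiv.Perm (Fin k))) (F : Equiv.Perm (Fin k) → RatField k),
      A (∑ i ∈ s, F i) = ∑ i ∈ s, A (F i) := by
    intro s F
    induction s using Finset.induction_on with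
    | empty => simpa using Azero
    | insert a s ha ih => rw [Finset.sum_insert ha, Finset.sum_insert ha, Aadd, ih]
  have Arho : ∀ g x, A (ρ g x) = sg g * A x := by
    intro g x
    rw [hA, hA, Finset.mul_sum]
    refine Fintype.sum_equiv (Equiv.mulRight g) _ _ fun σ => ?_
    simp only [Equiv.coe_mulRight, hmul, sg_mul, Function.comp]
    linear_combination (-(sg σ * ρ σ (ρ g x))) * sg_sq g
  have Aperm : ∀ g x, A (permMap g x) = sg g * A x := by
    intro g
    induction g using perm_ind with
    | h1 => simp [permMap_one, sg_one]
    | hm g h hg hh => intro x; rw [permMap_mul, hg, hh, sg_mul]; ring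
    | hs i h =>
      intro x
      have hne : (⟨i, by omega⟩ : Fin k) ≠ ⟨i + 1, h⟩ := by simp [Fin.ext_iff]
      have h2 := Yv_sub_ne _ _ hne 0
      rw [cK_zero, sub_zero] at h2
      have h3 := Yv_sub_ne _ _ hne.symm κ
      have key : ∃ y, y + ρ (Equiv.swap ⟨i, by omega⟩ ⟨i + 1, h⟩) y =
          x + permMap (Equiv.swap ⟨i, by omega⟩ ⟨i + 1, h⟩) x := by
        have h4 := Yv_sub_ne _ _ hne κ
        refine ⟨x * (Yv ⟨i + 1, h⟩ - Yv ⟨i, by omega⟩) /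
          (Yv ⟨i + 1, h⟩ - Yv ⟨i, by omega⟩ - cK k κ), ?_⟩
        rw [hdem]
        simp only [map_div₀, map_mul, map_sub, permMap_Yv, permMap_cK,
          Equiv.swap_apply_left, Equiv.swap_apply_right]
        field_simp
        ring
      obtain ⟨y, hy⟩ := key
      have h5 := congrArg A hy
      rw [Aadd, Aadd, Arho, sg_swap hne] at h5
      rw [sg_swap hne]
      linear_combination -h5
  have hfac : (k.factorial : RatField k) ≠ 0 := by
    exact_mod_cast k.factorial_ne_zero
  have AE : ∀ x, A (Eop x) = (k.factorial : RatField k) * A x := by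
    intro x
    unfold Eop
    rw [Asum]
    simp_rw [Asym _ _ (fun w => permMap_sg w _), Aperm, ← mul_assoc, sg_sq]
    simp [Fintype.card_perm]
  have Avd : A (vd k κ) = (k.factorial : RatField k) * vd k κ := by
    rw [hA]
    simp_rw [hvd, ← mul_assoc, sg_sq]
    simp [Fintype.card_perm]
  have Avd0 : A (vd k 0) = (k.factorial : RatField k) * vd k κ := by
    have h1 := AE (vd k κ)
    rw [Eop_vd, Asym _ _ (fun w => map_natCast _ _), Avd] at h1
    exact mul_left_cancel₀ hfac h1
  have hv0 := vd_ne (k := k) 0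
  have hE : ∀ w, permMap w (Eop f / vd k 0) = Eop f / vd k 0 := by
    intro w
    have hw : sg w ≠ 0 := left_ne_zero_of_mul_eq_one (sg_sq w)
    rw [map_div₀, perm_Eop, vd_zero_perm, mul_div_mul_left _ _ hw]
  have h1 := AE f
  have h2 := Asym (Eop f / vd k 0) (vd k 0) hE
  rw [div_mul_cancel₀ _ hv0, h1, Avd0] at h2
  have h3 : A f = Eop f / vd k 0 * vd k κ := by
    apply mul_left_cancel₀ hfac
    rw [h2]; ring
  rw [← hA, h3, Finset.prod_div_distrib]
  have h4 : ∏ q ∈ prs k, (Yv q.1 - Yv q.2) = vd k 0 := by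
    simp [vd, cK_zero]
  rw [h4]
  unfold vd
  ring
end

section
/- The deformed power sums p_1^ℏ, ..., p_k^ℏ freely generate the algebra of symmetric polynomials: ℂ[ℏ][Ω_1,...,Ω_k]^{S_k} = ℂ[ℏ][p_1^ℏ(Ω⃗), ..., p_k^ℏ(Ω⃗)] as a polynomial ring over ℂ[ℏ]. -/
set_option synthInstance.maxHeartbeats 1000000
set_option maxHeartbeats 1000000

open MvPolynomial Finset

/-- The ring `ℂ[ℏ][Ω_1,…,Ω_k]` of polynomials in `Ω_1,…,Ω_k` over `ℂ[ℏ]`. -/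
abbrev SymRing (k : ℕ) : Type := MvPolynomial (Fin k) (Polynomial ℂ)

/-- Its field of fractions. -/
abbrev SymField (k : ℕ) : Type := FractionRing (SymRing k)

/-- The variable `Ω i`, in the fraction field. -/
noncomputable def Om {k : ℕ} (i : Fin k) : SymField k :=
  algebraMap (SymRing k) (SymField k) (X i)

/-- The parameter `ℏ`, in the fraction field. -/
noncomputable def hb {k : ℕ} : SymField k :=
  algebraMap (SymRing k) (SymField k) (C Polynomial.X)


theorem dps_taylor_coeff {R : Type*} [CommRing R] (E : Polynomial R) (h : R) (n a : ℕ)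
    (hE : E.natDegree ≤ n + a + 1) :
    (Polynomial.taylor h E).coeff n - E.coeff n =
      h * ∑ j ∈ range (a + 1), E.coeff (n + a + 1 - j) *
        (((n + a + 1 - j).choose (a + 1 - j) : ℕ) : R) * h ^ (a - j) := by
  have h1 : (Polynomial.taylor h E).coeff n
      = ∑ m ∈ range (n + a + 1 + 1), E.coeff m * (h ^ (m - n) * (m.choose n : R)) := by
    conv_lhs => rw [Polynomial.as_sum_range' E (n + a + 1 + 1) (by omega)]
    simp only [map_sum, Polynomial.finsetSum_coeff, Polynomial.taylor_monomial,
      Polynomial.coeff_C_mul, Polynomial.coeff_X_add_C_pow]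
  have h2 : ∑ m ∈ range (n + a + 1 + 1), E.coeff m * (h ^ (m - n) * (m.choose n : R))
      = ∑ m ∈ range (a + 2), E.coeff (n + m) * (h ^ m * ((n + m).choose n : R)) := by
    rw [show n + a + 1 + 1 = n + (a + 2) by omega, Finset.sum_range_add]
    rw [Finset.sum_eq_zero, zero_add]
    · simp
    · intro m hm
      rw [Nat.choose_eq_zero_of_lt (Finset.mem_range.1 hm)]
      simp
  rw [h1, h2, Finset.sum_range_succ', ← Finset.sum_range_reflect, Finset.mul_sum]
  simp only [add_zero, pow_zero, Nat.choose_self, Nat.cast_one, mul_one, add_sub_cancel_right]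
  apply Finset.sum_congr rfl
  intro j hj
  have hj := Finset.mem_range.1 hj
  obtain ⟨d, rfl⟩ : ∃ d, a = j + d := ⟨a - j, by omega⟩
  rw [show n + (j + d + 1 - 1 - j + 1) = n + d + 1 by omega,
    show j + d + 1 - 1 - j + 1 = d + 1 by omega,
    show n + (j + d) + 1 - j = n + d + 1 by omega,
    show j + d + 1 - j = d + 1 by omega, show j + d - j = d by omega,
    Nat.choose_symm_of_eq_add (show n + d + 1 = n + (d + 1) by omega), pow_succ]
  ring

theorem dps_quot_coeff {R : Type*} [CommRing R] (Q : Polynomial R) (x : R) (k : ℕ)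
    (hQ : Q.Monic) (hk : Q.natDegree + 1 = k) (a : ℕ) (ha : a + 1 ≤ k) :
    Q.coeff (k - 1 - a) =
      ∑ b ∈ range (a + 1), ((Polynomial.X - Polynomial.C x) * Q).coeff (k - b) * x ^ (a - b) := by
  nontriviality R
  induction a with
  | zero =>
    have h0 : ((Polynomial.X - Polynomial.C x) * Q).coeff k = 1 := by
      have hm := (Polynomial.monic_X_sub_C x).mul hQ
      have hd : ((Polynomial.X - Polynomial.C x) * Q).natDegree = k := by
        rw [(Polynomial.monic_X_sub_C x).natDegree_mul hQ, Polynomial.natDegree_X_sub_C]; omega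
      rw [← hd]; exact hm
    simp only [zero_add, Finset.sum_range_one, Nat.sub_zero, pow_zero, mul_one, h0]
    rw [← hk]; simpa [Polynomial.Monic] using hQ
  | succ a ih =>
    rw [Finset.sum_range_succ]
    have : ∑ b ∈ range (a + 1), ((Polynomial.X - Polynomial.C x) * Q).coeff (k - b) * x ^ (a + 1 - b)
       = x * Q.coeff (k - 1 - a) := by
      rw [ih (by omega), Finset.mul_sum]
      apply Finset.sum_congr rfl
      intro b hb
      have := Finset.mem_range.1 hb
      rw [show a + 1 - b = a - b + 1 by omega, pow_succ]; ring
    rw [this, show k - (a + 1) = k - 1 - (a + 1) + 1 by omega, sub_mul, Polynomial.coeff_sub,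
      Polynomial.coeff_X_mul, Polynomial.coeff_C_mul,
      show k - 1 - (a + 1) + 1 = k - 1 - a by omega]
    simp

theorem dps_lagrange {K : Type*} [Field K] (k : ℕ) (x : Fin k → K) (hx : Function.Injective x)
    (h : K) :
    Polynomial.taylor h (∏ j, (Polynomial.X - Polynomial.C (x j))) -
      ∏ j, (Polynomial.X - Polynomial.C (x j)) =
    Polynomial.C h * ∑ i, Polynomial.C (∏ j ∈ univ.erase i, ((x i - x j + h) / (x i - x j))) *
      ∏ j ∈ univ.erase i, (Polynomial.X - Polynomial.C (x j)) := by
  set E := ∏ j, (Polynomial.X - Polynomial.C (x j)) with hE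
  have hEm : E.Monic := Polynomial.monic_prod_of_monic _ _ fun i _ => Polynomial.monic_X_sub_C _
  have hEd : E.degree = k := by
    rw [hE, Polynomial.degree_prod]; simp
  apply Polynomial.eq_of_degrees_lt_of_eval_index_eq (s := univ) (v := x) hx.injOn
  · rw [Finset.card_univ, Fintype.card_fin, ← hEd, ← Polynomial.degree_taylor E h]
    apply Polynomial.degree_sub_lt_left
    · simp
    · simpa using hEm.ne_zero
    · simp
  · rw [Finset.card_univ, Fintype.card_fin, Finset.mul_sum]
    refine (Polynomial.degree_sum_le _ _).trans_lt ?_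
    rw [Finset.sup_lt_iff (WithBot.bot_lt_coe _)]
    intro i _
    have hk : 0 < k := i.pos
    rw [← Polynomial.smul_eq_C_mul, ← Polynomial.smul_eq_C_mul]
    refine (Polynomial.degree_smul_le _ _).trans_lt ((Polynomial.degree_smul_le _ _).trans_lt ?_)
    have h1 : (∏ j ∈ univ.erase i, (Polynomial.X - Polynomial.C (x j))).degree
        = ((k - 1 : ℕ) : WithBot ℕ) := by
      rw [Polynomial.degree_prod]; simp
    rw [h1]
    exact_mod_cast (by omega : k - 1 < k)
  · intro i _
    have hEi : E.eval (x i) = 0 := by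
      rw [hE, Polynomial.eval_prod]
      exact Finset.prod_eq_zero (Finset.mem_univ i) (by simp)
    rw [Polynomial.eval_sub, hEi, sub_zero, Polynomial.taylor_eval, Polynomial.eval_mul,
      Polynomial.eval_C, Polynomial.eval_finsetSum, Finset.sum_eq_single i]
    · rw [hE, Polynomial.eval_prod, ← Finset.mul_prod_erase _ _ (Finset.mem_univ i)]
      simp only [Polynomial.eval_mul, Polynomial.eval_C, Polynomial.eval_sub, Polynomial.eval_X,
        Polynomial.eval_prod]
      rw [← Finset.prod_mul_distrib]
      congr 1
      · ring
      · apply Finset.prod_congr rfl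
        intro j hj
        have : x i - x j ≠ 0 := sub_ne_zero.2 fun e => (Finset.ne_of_mem_erase hj) (hx e).symm
        field_simp
        ring
    · intro m _ hm
      have h0 : ∏ j ∈ univ.erase m, Polynomial.eval (x i) (Polynomial.X - Polynomial.C (x j)) = 0 :=
        Finset.prod_eq_zero (i := i) (Finset.mem_erase.2 ⟨hm.symm, Finset.mem_univ _⟩) (by simp)
      rw [Polynomial.eval_mul, Polynomial.eval_prod, h0, mul_zero]
    · simp

theorem dps_rec {K : Type*} [Field K] (k : ℕ) (x : Fin k → K) (hx : Function.Injective x)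
    (h : K) (hh : h ≠ 0) (a : ℕ) (ha : a ≤ k) :
    ∑ b ∈ range (a + 1), (∏ j, (Polynomial.X - Polynomial.C (x j))).coeff (k - b) *
      (∑ i, x i ^ (a - b) * ∏ j ∈ univ.erase i, ((x i - x j + h) / (x i - x j))) =
    ∑ j ∈ range (a + 1), (∏ j, (Polynomial.X - Polynomial.C (x j))).coeff (k - j) *
        (((k - j).choose (a + 1 - j) : ℕ) : K) * h ^ (a - j) := by
  have hL := dps_lagrange k x hx h
  have hsplit : ∀ i, ∏ j, (Polynomial.X - Polynomial.C (x j)) = (Polynomial.X - Polynomial.C (x i)) *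
    ∏ j ∈ univ.erase i, (Polynomial.X - Polynomial.C (x j)) := fun i =>
      (Finset.mul_prod_erase _ _ (Finset.mem_univ i)).symm
  have hEd : (∏ j, (Polynomial.X - Polynomial.C (x j))).natDegree = k := by
    rw [Polynomial.natDegree_prod_of_monic _ _ fun i _ => Polynomial.monic_X_sub_C _]; simp
  have hEi : ∀ i, (∏ j, (Polynomial.X - Polynomial.C (x j))).eval (x i) = 0 := by
    intro i
    rw [Polynomial.eval_prod]
    exact Finset.prod_eq_zero (Finset.mem_univ i) (by simp)
  have hswap : ∑ b ∈ range (a + 1), (∏ j, (Polynomial.X - Polynomial.C (x j))).coeff (k - b) *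
      (∑ i, x i ^ (a - b) * ∏ j ∈ univ.erase i, ((x i - x j + h) / (x i - x j)))
      = ∑ i, (∏ j ∈ univ.erase i, ((x i - x j + h) / (x i - x j))) *
        ∑ b ∈ range (a + 1), (∏ j, (Polynomial.X - Polynomial.C (x j))).coeff (k - b) *
          x i ^ (a - b) := by
    simp only [Finset.mul_sum]
    rw [Finset.sum_comm]
    refine Finset.sum_congr rfl fun i _ => Finset.sum_congr rfl fun b _ => by ring
  rw [hswap]
  rcases ha.lt_or_eq with hlt | rfl
  · obtain ⟨n, rfl⟩ : ∃ n, k = n + a + 1 := ⟨k - 1 - a, by omega⟩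
    have hT := dps_taylor_coeff (∏ j, (Polynomial.X - Polynomial.C (x j))) h n a hEd.le
    rw [← Polynomial.coeff_sub, hL, Polynomial.coeff_C_mul] at hT
    rw [← mul_left_cancel₀ hh hT, Polynomial.finsetSum_coeff]
    refine Finset.sum_congr rfl fun i _ => ?_
    rw [Polynomial.coeff_C_mul]
    congr 1
    have := dps_quot_coeff (∏ j ∈ univ.erase i, (Polynomial.X - Polynomial.C (x j))) (x i) (n + a + 1)
      (Polynomial.monic_prod_of_monic _ _ fun i _ => Polynomial.monic_X_sub_C _) (by
        rw [Polynomial.natDegree_prod_of_monic _ _ fun i _ => Polynomial.monic_X_sub_C _]; simp)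
      a (by omega)
    rw [← hsplit, show n + a + 1 - 1 - a = n by omega] at this
    exact this.symm
  · rw [Finset.sum_eq_zero, Finset.sum_eq_zero]
    · intro j hj
      have := Finset.mem_range.1 hj
      rw [Nat.choose_eq_zero_of_lt (by omega)]; simp
    · intro i _
      have := hEi i
      rw [Polynomial.eval_eq_sum_range, hEd, ← Finset.sum_range_reflect] at this
      simp only [add_tsub_cancel_right] at this
      rw [this, mul_zero]

/-- The coefficient `(-1)^b e_b` of the monic polynomial with roots `Ω_i`. -/
noncomputable def dpsE (k b : ℕ) : SymRing k :=
  (∏ j : Fin k, (Polynomial.X - Polynomial.C (X j : SymRing k))).coeff (k - b)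

/-- The deformed power sum in the fraction field. -/
noncomputable def dpsQ (k a : ℕ) : SymField k :=
  ∑ i : Fin k, Om i ^ a * ∏ j ∈ Finset.univ.erase i, ((Om i - Om j + hb) / (Om i - Om j))

theorem dpsE_eq (k b : ℕ) (hb : b ≤ k) :
    dpsE k b = (-1) ^ b * esymm (Fin k) (Polynomial ℂ) b := by
  have h := Multiset.prod_X_sub_C_coeff ((univ : Finset (Fin k)).val.map (X : Fin k → SymRing k))
    (k := k - b) (by simp)
  simp only [Multiset.map_map, Multiset.card_map, Finset.card_val, Finset.card_univ,
    Fintype.card_fin, show k - (k - b) = b by omega, ← esymm_eq_multiset_esymm] at h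
  exact h

theorem dpsE_zero (k : ℕ) : dpsE k 0 = 1 := by
  rw [dpsE_eq k 0 (Nat.zero_le _)]; simp

theorem dpsE_mem (k b : ℕ) (hb : b ≤ k) :
    dpsE k b ∈ symmetricSubalgebra (Fin k) (Polynomial ℂ) := by
  rw [dpsE_eq k b hb]
  exact mul_mem (pow_mem (neg_mem (one_mem _)) _) (esymm_isSymmetric _ _ _)

theorem dps_map (k b : ℕ) : algebraMap (SymRing k) (SymField k) (dpsE k b) =
    (∏ j : Fin k, (Polynomial.X - Polynomial.C (Om j))).coeff (k - b) := by
  rw [dpsE, ← Polynomial.coeff_map, Polynomial.map_prod]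
  simp [Om]

theorem dpsQ_rec (k a : ℕ) (ha : a ≤ k) :
    ∑ b ∈ range (a + 1), algebraMap (SymRing k) (SymField k) (dpsE k b) * dpsQ k (a - b) =
    algebraMap (SymRing k) (SymField k) (∑ j ∈ range (a + 1), dpsE k j *
      (((k - j).choose (a + 1 - j) : ℕ) : SymRing k) * (C Polynomial.X) ^ (a - j)) := by
  have hinj := IsFractionRing.injective (SymRing k) (SymField k)
  have h := dps_rec k (Om : Fin k → SymField k) (hinj.comp (X_injective)) hb
    (by
      intro h0
      have := hinj (h0.trans (map_zero _).symm)
      simp at this) a ha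
  simp only [map_sum, map_mul, map_pow, map_natCast, dps_map]
  exact h

theorem dpsP_exists (k a : ℕ) (ha : a ≤ k) : ∃ p ∈ symmetricSubalgebra (Fin k) (Polynomial ℂ),
    algebraMap (SymRing k) (SymField k) p = dpsQ k a := by
  induction a using Nat.strong_induction_on with
  | _ a ih =>
    have h := dpsQ_rec k a ha
    rw [Finset.sum_range_succ'] at h
    choose! p hp hpq using ih
    refine ⟨(∑ j ∈ range (a + 1), dpsE k j *
      (((k - j).choose (a + 1 - j) : ℕ) : SymRing k) * (C Polynomial.X) ^ (a - j)) -
      ∑ b ∈ range a, dpsE k (b + 1) * p (a - (b + 1)), ?_, ?_⟩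
    · refine sub_mem (sum_mem fun j hj => ?_) (sum_mem fun b hb => ?_)
      · have := Finset.mem_range.1 hj
        refine mul_mem (mul_mem (dpsE_mem k j (by omega)) (natCast_mem _ _)) (pow_mem ?_ _)
        exact IsSymmetric.C _
      · have := Finset.mem_range.1 hb
        exact mul_mem (dpsE_mem k _ (by omega)) (hp _ (by omega) (by omega))
    · rw [map_sub, ← h, dpsE_zero, map_sum]
      simp only [map_one, one_mul, Nat.sub_zero, map_mul]
      have h1 : ∑ b ∈ range a, algebraMap (SymRing k) (SymField k) (dpsE k (b + 1)) *
          algebraMap (SymRing k) (SymField k) (p (a - (b + 1))) =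
          ∑ b ∈ range a, algebraMap (SymRing k) (SymField k) (dpsE k (b + 1)) *
            dpsQ k (a - (b + 1)) := by
        refine Finset.sum_congr rfl fun b hb => ?_
        have := Finset.mem_range.1 hb
        rw [hpq (a - (b + 1)) (by omega) (by omega)]
      rw [h1]
      ring

theorem dps_noeth {R : Type*} [CommRing R] [IsNoetherianRing R] (f : R →+* R)
    (hf : Function.Surjective f) : Function.Injective f := by
  have hmono : Monotone fun n : ℕ => RingHom.ker (f ^ n) := by
    refine monotone_nat_of_le_succ fun n x hx => ?_
    rw [RingHom.mem_ker] at hx ⊢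
    rw [pow_succ', RingHom.mul_def, RingHom.comp_apply, hx, map_zero]
  obtain ⟨n, hn⟩ := monotone_stabilizes_iff_noetherian.2 (inferInstanceAs (IsNoetherian R R))
    ⟨_, hmono⟩
  rw [injective_iff_map_eq_zero]
  intro x hx
  have hs : Function.Surjective (f ^ n) := by
    rw [RingHom.coe_pow]; exact hf.iterate n
  obtain ⟨y, rfl⟩ := hs x
  have hy : y ∈ RingHom.ker (f ^ (n + 1)) := by
    rw [RingHom.mem_ker, pow_succ', RingHom.mul_def, RingHom.comp_apply, hx]
  have h2 : RingHom.ker (f ^ n) = RingHom.ker (f ^ (n + 1)) := hn (n + 1) (Nat.le_succ n)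
  rw [← h2] at hy
  exact hy

theorem dps_sign {R : Type*} [CommRing R] (y : R) (n : ℕ) : (-1) ^ n * ((-1) ^ n * y) = y := by
  rw [← mul_assoc, ← mul_pow, neg_mul_neg, one_mul, one_pow, one_mul]

theorem dps_surj (k : ℕ) (p : ℕ → SymRing k)
    (hpq : ∀ a ≤ k, algebraMap (SymRing k) (SymField k) (p a) = dpsQ k a)
    (A : Subalgebra (Polynomial ℂ) (SymRing k)) (hA : ∀ a, 1 ≤ a → a ≤ k → p a ∈ A)
    (a : ℕ) (ha : a ≤ k) : dpsE k a ∈ A := by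
  have hinj := IsFractionRing.injective (SymRing k) (SymField k)
  have hrec : ∀ a ≤ k, ∑ b ∈ range (a + 1), dpsE k b * p (a - b) =
      ∑ j ∈ range (a + 1), dpsE k j *
      (((k - j).choose (a + 1 - j) : ℕ) : SymRing k) * (C Polynomial.X) ^ (a - j) := by
    intro a ha
    apply hinj
    rw [← dpsQ_rec k a ha, map_sum]
    refine Finset.sum_congr rfl fun b _ => ?_
    rw [map_mul, hpq _ (by omega)]
  have hp0 : p 0 = (k : SymRing k) := by
    have := hrec 0 (Nat.zero_le _)
    simpa [dpsE_zero] using this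
  induction a using Nat.strong_induction_on with
  | _ a ih =>
    rcases Nat.eq_zero_or_pos a with rfl | hpos
    · rw [dpsE_zero]; exact one_mem _
    have h := hrec a ha
    rw [Finset.sum_range_succ, Finset.sum_range_succ _ a] at h
    simp only [Nat.sub_self, hp0, Nat.add_sub_cancel_left, Nat.choose_one_right, pow_zero,
      mul_one, Nat.cast_sub ha] at h
    have key : (a : SymRing k) * dpsE k a ∈ A := by
      have e : (a : SymRing k) * dpsE k a = ∑ j ∈ range a, dpsE k j *
          (((k - j).choose (a + 1 - j) : ℕ) : SymRing k) * (C Polynomial.X) ^ (a - j) -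
          ∑ b ∈ range a, dpsE k b * p (a - b) := by linear_combination h
      rw [e]
      refine sub_mem (sum_mem fun j hj => ?_) (sum_mem fun b hb => ?_)
      · have := Finset.mem_range.1 hj
        refine mul_mem (mul_mem (ih j this (by omega)) (natCast_mem _ _)) (pow_mem ?_ _)
        exact A.algebraMap_mem _
      · have := Finset.mem_range.1 hb
        exact mul_mem (ih b this (by omega)) (hA _ (by omega) (by omega))
    have ha0 : (a : ℂ) ≠ 0 := by exact_mod_cast hpos.ne'
    have e2 : dpsE k a = (Polynomial.C ((a : ℂ)⁻¹)) • ((a : SymRing k) * dpsE k a) := by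
      have : (C (Polynomial.C ((a : ℂ)⁻¹)) : SymRing k) * (a : SymRing k) = 1 := by
        rw [show (a : SymRing k) = C (Polynomial.C (a : ℂ)) by simp, ← C_mul, ← Polynomial.C_mul,
          inv_mul_cancel₀ ha0]
        simp
      rw [MvPolynomial.smul_eq_C_mul, ← mul_assoc, this, one_mul]
    rw [e2]
    exact A.smul_mem key _

/-- The deformed power sums `p_1^ℏ, …, p_k^ℏ`, given by the closed
formula `p_a^ℏ(Ω) = ∑_i Ω_i^a ∏_{j≠i} ((Ω_i − Ω_j + ℏ)/(Ω_i − Ω_j))` (a symmetric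
polynomial in `Ω_1,…,Ω_k` over `ℂ[ℏ]`), freely generate the algebra of symmetric
polynomials: the `ℂ[ℏ]`-algebra map `ℂ[ℏ][x_1,…,x_k] → ℂ[ℏ][Ω_1,…,Ω_k]`,
`x_a ↦ p_a^ℏ`, is injective with range exactly the symmetric polynomials. -/
theorem statement14 (k : ℕ) :
    ∃ P : Fin k → SymRing k,
      (∀ a, (P a).IsSymmetric) ∧
      (∀ a : Fin k,
        algebraMap (SymRing k) (SymField k) (P a) =
          ∑ i : Fin k, Om i ^ ((a : ℕ) + 1) *
            ∏ j ∈ Finset.univ.erase i, ((Om i - Om j + hb) / (Om i - Om j))) ∧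
      Function.Injective (MvPolynomial.aeval (R := Polynomial ℂ) P) ∧
      Set.range (MvPolynomial.aeval (R := Polynomial ℂ) P) =
        {f : SymRing k | f.IsSymmetric} := by
  have hex := dpsP_exists k
  choose! p hp hpq using hex
  let P : Fin k → SymRing k := fun a => p (a + 1)
  have hsym : ∀ a, (P a).IsSymmetric := fun a => hp (a + 1) a.2
  have hle : (aeval (R := Polynomial ℂ) P).range ≤ symmetricSubalgebra (Fin k) (Polynomial ℂ) := by
    rw [← Algebra.adjoin_range_eq_range_aeval, Algebra.adjoin_le_iff]
    rintro _ ⟨a, rfl⟩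
    exact hsym a
  let ψ := esymmAlgEquiv (Fin k) (Polynomial ℂ) (Fintype.card_fin k)
  have hψ : ∀ q, ((ψ q : symmetricSubalgebra (Fin k) (Polynomial ℂ)) : SymRing k) =
      aeval (fun i : Fin k => esymm (Fin k) (Polynomial ℂ) (i + 1)) q := fun q =>
    esymmAlgHom_apply _
  have hge : symmetricSubalgebra (Fin k) (Polynomial ℂ) ≤ (aeval (R := Polynomial ℂ) P).range := by
    intro f hf
    obtain ⟨q, hq⟩ := ψ.surjective ⟨f, hf⟩
    have hq' : aeval (fun i : Fin k => esymm (Fin k) (Polynomial ℂ) (i + 1)) q = f := by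
      rw [← hψ, hq]
    have hmem : ∀ i : Fin k, esymm (Fin k) (Polynomial ℂ) (i + 1) ∈
        (aeval (R := Polynomial ℂ) P).range := by
      intro i
      have h1 := dps_surj k p hpq (aeval (R := Polynomial ℂ) P).range (by
        intro a h1 h2
        refine ⟨X ⟨a - 1, by omega⟩, ?_⟩
        simp [P, Nat.sub_add_cancel h1]) (i + 1) i.2
      rw [dpsE_eq k _ i.2] at h1
      have h2 := mul_mem (pow_mem (neg_mem (one_mem (aeval (R := Polynomial ℂ) P).range))
        ((i : ℕ) + 1)) h1
      have h3 : ∀ (y : SymRing k) (n : ℕ), (-1) ^ n * ((-1) ^ n * y) = y := by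
        exact dps_sign
      exact (h3 (esymm (Fin k) (Polynomial ℂ) (i + 1)) (i + 1)) ▸ h2
    have hle2 : (aeval (R := Polynomial ℂ)
        (fun i : Fin k => esymm (Fin k) (Polynomial ℂ) (i + 1))).range ≤
        (aeval (R := Polynomial ℂ) P).range := by
      rw [← Algebra.adjoin_range_eq_range_aeval, Algebra.adjoin_le_iff]
      rintro _ ⟨i, rfl⟩
      exact hmem i
    exact hle2 ⟨q, hq'⟩
  refine ⟨P, hsym, fun a => hpq (a + 1) a.2, ?_, ?_⟩
  · let φ : MvPolynomial (Fin k) (Polynomial ℂ) →ₐ[Polynomial ℂ]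
        symmetricSubalgebra (Fin k) (Polynomial ℂ) :=
      (aeval (R := Polynomial ℂ) P).codRestrict _ fun q => hle ⟨q, rfl⟩
    let θ : MvPolynomial (Fin k) (Polynomial ℂ) →+* MvPolynomial (Fin k) (Polynomial ℂ) :=
      (ψ.symm.toAlgHom.comp φ).toRingHom
    have hs : Function.Surjective θ := by
      intro y
      obtain ⟨q, hq⟩ := hge (ψ y).2
      refine ⟨q, ?_⟩
      have : φ q = ψ y := Subtype.ext hq
      change ψ.symm (φ q) = y
      rw [this, AlgEquiv.symm_apply_apply]
    have hi : Function.Injective θ := dps_noeth θ hs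
    intro q r hqr
    apply hi
    have : φ q = φ r := Subtype.ext hqr
    change ψ.symm (φ q) = ψ.symm (φ r)
    rw [this]
  · ext f
    exact ⟨fun h => hle h, fun h => hge h⟩
end
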